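/- Let a ≥ 1, k = 2^a − 1, V a set of size 2k, and D ⊆ binom(V,k) a (k−1)-(2k, k, 2^{a−1}) design, meaning every (k−1)-subset of V is contained in exactly 2^{a−1} members of D. Then D is anti-complementary: for every k-subset K of V, K ∈ D if and only if Kᶜ ∉ D. -/

import Mathlib

/-!
Give every `k`-subset `B` of the point set the weight `f B = (k + 1) · 1_D(B) - λ`. A
`(k - 1)`-subset of a `2k`-set lies in exactly `k + 1` sets of size `k`, so the weights of the
`k`-sets above it add up to `0`; by double counting the same then holds above every set of fewer
than `k` points. Inclusion–exclusion over the subsets of a `k`-set `K` expresses the total weight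
of the `k`-sets disjoint from `K` by these sums. The only such set is `Kᶜ` and the only surviving
term is that of `K` itself, so `f Kᶜ = (-1) ^ k * f K`. If `λ = (k + 1) / 2`, then `k` is odd and
`f = ±λ` according to membership in `D`, so exactly one of `K` and `Kᶜ` is a block.
-/

open Finset

section SupersetSum

variable {α M : Type*} [DecidableEq α]

/-- The total weight of the members of the family `𝒜` that contain `S`. A weight all of whose
superset sums over `t`-sets vanish is known as a null `t`-design. -/
def supersetSum [AddCommMonoid M] (𝒜 : Finset (Finset α)) (f : Finset α → M) (S : Finset α) :
    M :=
  ∑ B ∈ 𝒜 with S ⊆ B, f B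

variable {𝒜 : Finset (Finset α)} {k : ℕ} {K S : Finset α}

section AddCommMonoid

variable [AddCommMonoid M]

lemma supersetSum_eq_apply (h𝒜 : (𝒜 : Set (Finset α)).Sized k) (hK : K ∈ 𝒜) (f : Finset α → M) :
    supersetSum 𝒜 f K = f K := by
  have filter_eq : {B ∈ 𝒜 | K ⊆ B} = {K} := by
    ext B
    simp only [mem_filter, mem_singleton]
    refine ⟨fun ⟨hB, hKB⟩ ↦ (eq_of_subset_of_card_le hKB ?_).symm, ?_⟩
    · rw [h𝒜 hB, h𝒜 hK]
    · rintro rfl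
      exact ⟨hK, Subset.rfl⟩
  rw [supersetSum, filter_eq, sum_singleton]

lemma sum_supersetSum_insert (h𝒜 : (𝒜 : Set (Finset α)).Sized k) (f : Finset α → M)
    (S : Finset α) :
    ∑ x ∈ 𝒜.biUnion id \ S, supersetSum 𝒜 f (insert x S) = (k - #S) • supersetSum 𝒜 f S := by
  calc
    ∑ x ∈ 𝒜.biUnion id \ S, ∑ B ∈ 𝒜 with insert x S ⊆ B, f B
      = ∑ B ∈ 𝒜 with S ⊆ B, ∑ _x ∈ B \ S, f B := by
        refine sum_comm' fun x B ↦ ?_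
        simp only [mem_filter, insert_subset_iff, mem_sdiff, mem_biUnion, id]
        exact ⟨fun ⟨⟨_, hxS⟩, hB, hxB, hSB⟩ ↦ ⟨⟨hxB, hxS⟩, hB, hSB⟩,
          fun ⟨⟨hxB, hxS⟩, hB, hSB⟩ ↦ ⟨⟨⟨B, hB, hxB⟩, hxS⟩, hB, hxB, hSB⟩⟩
    _ = ∑ B ∈ 𝒜 with S ⊆ B, (k - #S) • f B := by
        refine sum_congr rfl fun B hB ↦ ?_
        obtain ⟨hB𝒜, hSB⟩ := mem_filter.mp hB
        rw [sum_const, card_sdiff_of_subset hSB, h𝒜 hB𝒜]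
    _ = (k - #S) • ∑ B ∈ 𝒜 with S ⊆ B, f B := (smul_sum ..).symm

lemma supersetSum_eq_zero_of_card_lt [IsAddTorsionFree M] (h𝒜 : (𝒜 : Set (Finset α)).Sized k)
    {f : Finset α → M} (hf : ∀ T, #T + 1 = k → supersetSum 𝒜 f T = 0) (hS : #S < k) :
    supersetSum 𝒜 f S = 0 := by
  induction h : k - #S generalizing S with
  | zero => omega
  | succ d ih =>
    obtain rfl | hd := d.eq_zero_or_pos
    · exact hf S (by omega)
    have insert_eq_zero : ∀ x ∈ 𝒜.biUnion id \ S, supersetSum 𝒜 f (insert x S) = 0 := by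
      intro x hx
      have := card_insert_of_notMem (mem_sdiff.mp hx).2
      exact ih (by omega) (by omega)
    have smul_eq_zero := sum_supersetSum_insert h𝒜 f S
    rw [sum_eq_zero insert_eq_zero, eq_comm] at smul_eq_zero
    exact (smul_eq_zero_iff_right (by omega)).mp smul_eq_zero

end AddCommMonoid

variable [AddCommGroup M]

lemma sum_filter_disjoint_eq_sum_powerset (𝒜 : Finset (Finset α)) (f : Finset α → M)
    (K : Finset α) :
    ∑ B ∈ 𝒜 with Disjoint K B, f B = ∑ S ∈ K.powerset, (-1) ^ #S • supersetSum 𝒜 f S := by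
  symm
  calc
    ∑ S ∈ K.powerset, (-1) ^ #S • supersetSum 𝒜 f S
      = ∑ B ∈ 𝒜, ∑ S ∈ (K ∩ B).powerset, (-1) ^ #S • f B := by
        simp only [supersetSum, smul_sum]
        refine sum_comm' fun S B ↦ ?_
        simp only [mem_powerset, mem_filter, subset_inter_iff]
        tauto
    _ = ∑ B ∈ 𝒜, if Disjoint K B then f B else 0 := by
        refine sum_congr rfl fun B _ ↦ ?_
        rw [← sum_smul, sum_powerset_neg_one_pow_card, ite_smul, one_smul, zero_smul]
        simp only [disjoint_iff_inter_eq_empty]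
    _ = ∑ B ∈ 𝒜 with Disjoint K B, f B := (sum_filter ..).symm

lemma sum_filter_disjoint_eq_of_forall_ssubset (f : Finset α → M)
    (hf : ∀ S ⊂ K, supersetSum 𝒜 f S = 0) :
    ∑ B ∈ 𝒜 with Disjoint K B, f B = (-1) ^ #K • supersetSum 𝒜 f K := by
  rw [sum_filter_disjoint_eq_sum_powerset]
  refine sum_eq_single_of_mem K (mem_powerset_self K) fun S hS hSK ↦ ?_
  rw [hf S ((mem_powerset.mp hS).ssubset_of_ne hSK), smul_zero]

end SupersetSum

section HalfSized

variable {α M : Type*} [Fintype α] [DecidableEq α] {k : ℕ} {K : Finset α}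

lemma filter_disjoint_powersetCard_eq_singleton_compl (hα : Fintype.card α = 2 * k)
    (hK : #K = k) : {B ∈ powersetCard k (univ : Finset α) | Disjoint K B} = {Kᶜ} := by
  have hKc : #Kᶜ = k := by rw [card_compl, hα, hK]; omega
  ext B
  simp only [mem_filter, mem_powersetCard_univ, mem_singleton]
  refine ⟨fun ⟨hB, hKB⟩ ↦ eq_of_subset_of_card_le ?_ (hKc.trans hB.symm).le, ?_⟩
  · exact subset_compl_iff_disjoint_left.mpr hKB
  · rintro rfl
    exact ⟨hKc, disjoint_compl_right⟩

theorem apply_compl_eq_neg_one_pow_smul [AddCommGroup M] [IsAddTorsionFree M]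
    (hα : Fintype.card α = 2 * k) {f : Finset α → M}
    (hf : ∀ T, #T + 1 = k → supersetSum (powersetCard k univ) f T = 0) (hK : #K = k) :
    f Kᶜ = (-1) ^ k • f K := by
  have sized := Set.sized_powersetCard (univ : Finset α) k
  calc
    f Kᶜ = ∑ B ∈ powersetCard k univ with Disjoint K B, f B := by
      rw [filter_disjoint_powersetCard_eq_singleton_compl hα hK, sum_singleton]
    _ = (-1) ^ #K • supersetSum (powersetCard k univ) f K :=
      sum_filter_disjoint_eq_of_forall_ssubset f fun S hS ↦
        supersetSum_eq_zero_of_card_lt sized hf (hK ▸ card_lt_card hS)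
    _ = (-1) ^ k • f K := by
      rw [hK, supersetSum_eq_apply sized (mem_powersetCard_univ.mpr hK)]

end HalfSized

/-- `D` is a `t-(v, k, l)` design on the point set `α`, where `v` is the cardinality of `α`. -/
structure IsDesign {α : Type*} [DecidableEq α] (t k l : ℕ) (D : Finset (Finset α)) : Prop where
  sized : (D : Set (Finset α)).Sized k
  card_filter_subset : ∀ T, #T = t → #{B ∈ D | T ⊆ B} = l

namespace IsDesign

variable {α : Type*} [Fintype α] [DecidableEq α] {t k l : ℕ} {D : Finset (Finset α)}
  {K T : Finset α}

lemma supersetSum_ite_mem_sub_const (hD : IsDesign t k l D) (htk : t ≤ k) (hT : #T = t)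
    (m c : ℤ) :
    supersetSum (powersetCard k univ) (fun B ↦ (if B ∈ D then m else 0) - c) T =
      l * m - (Fintype.card α - t).choose (k - t) * c := by
  have inter_eq : {B ∈ powersetCard k (univ : Finset α) | T ⊆ B ∧ B ∈ D} = {B ∈ D | T ⊆ B} := by
    ext B
    simp only [mem_filter, mem_powersetCard_univ]
    exact ⟨fun h ↦ ⟨h.2.2, h.2.1⟩, fun h ↦ ⟨hD.sized h.1, h.2, h.1⟩⟩
  rw [supersetSum, sum_sub_distrib, ← sum_filter, filter_filter, inter_eq, sum_const, sum_const,
    hD.card_filter_subset T hT,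
    card_filter_powersetCard_subset T univ k (subset_univ T) (hT.trans_le htk), hT, card_univ,
    nsmul_eq_mul, nsmul_eq_mul]

theorem ite_mem_compl_sub_eq (hD : IsDesign (k - 1) k l D) (hα : Fintype.card α = 2 * k)
    (hK : #K = k) :
    (if Kᶜ ∈ D then (k + 1 : ℤ) else 0) - l =
      (-1) ^ k * ((if K ∈ D then (k + 1 : ℤ) else 0) - l) := by
  let f (B : Finset α) : ℤ := (if B ∈ D then (k + 1 : ℤ) else 0) - l
  have supersetSum_eq_zero (T : Finset α) (hT : #T + 1 = k) :
      supersetSum (powersetCard k univ) f T = 0 := by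
    have choose_eq : (Fintype.card α - (k - 1)).choose (k - (k - 1)) = k + 1 := by
      rw [show Fintype.card α - (k - 1) = k + 1 by omega, show k - (k - 1) = 1 by omega,
        Nat.choose_one_right]
    rw [hD.supersetSum_ite_mem_sub_const (by omega) (by omega), choose_eq]
    push_cast
    ring
  exact apply_compl_eq_neg_one_pow_smul hα supersetSum_eq_zero hK

end IsDesign

theorem halving_root_anti_complementary_general {α : Type*} [Fintype α] [DecidableEq α]
    {k l : ℕ} (hl : 2 * l = k + 1) (hα : Fintype.card α = 2 * k) {D : Finset (Finset α)}
    (hD : IsDesign (k - 1) k l D) {K : Finset α} (hK : #K = k) : K ∈ D ↔ Kᶜ ∉ D := by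
  have k_odd : Odd k := ⟨l - 1, by omega⟩
  have indicators_sum :
      (if Kᶜ ∈ D then (k + 1 : ℤ) else 0) + (if K ∈ D then (k + 1 : ℤ) else 0) = k + 1 := by
    have weight_compl := hD.ite_mem_compl_sub_eq hα hK
    rw [k_odd.neg_one_pow] at weight_compl
    omega
  split_ifs at indicators_sum with hKcD hKD hKD
  · omega
  · simp [hKD, hKcD]
  · simp [hKD, hKcD]
  · omega

/-- Let `k = 2^a - 1` with `a ≥ 1`, `|V| = 2k`, and `D` a `(k-1)-(2k, k, 2^{a-1})`
design. Then `D` is anti-complementary: `K ∈ D ↔ Kᶜ ∉ D` for every `k`-subset `K`. -/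
theorem halving_root_anti_complementary {α : Type*} [Fintype α] [DecidableEq α]
    (a k : ℕ) (ha : 1 ≤ a) (hk : k = 2 ^ a - 1) (hn : Fintype.card α = 2 * k)
    (D : Finset (Finset α))
    (hD : D ⊆ Finset.powersetCard k (Finset.univ : Finset α))
    (hdesign : ∀ T ∈ Finset.powersetCard (k - 1) (Finset.univ : Finset α),
      (D.filter (fun B => T ⊆ B)).card = 2 ^ (a - 1)) :
    ∀ K ∈ Finset.powersetCard k (Finset.univ : Finset α),
      (K ∈ D ↔ Finset.univ \ K ∉ D) := by
  have two_mul_pow_pred : 2 * 2 ^ (a - 1) = k + 1 := by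
    rw [mul_pow_sub_one (by omega), hk, Nat.sub_add_cancel Nat.one_le_two_pow]
  exact fun K hK ↦ halving_root_anti_complementary_general two_mul_pow_pred hn
    ⟨subset_powersetCard_univ_iff.mp hD, fun T hT ↦ hdesign T (mem_powersetCard_univ.mpr hT)⟩
    (mem_powersetCard_univ.mp hK)
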